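/- Let L be a lattice with a least element ⊥ and let a ∈ L be an atom of L that is also a neutral element of L. Then an element x ∈ L is a codistributive element of L if and only if x ⊔ a is a codistributive element of L. -/

import Mathlib

/-- An element `x` of a lattice `L` is neutral if for all `y, z ∈ L` one has
`(x ⊔ y) ⊓ (y ⊔ z) ⊓ (z ⊔ x) = (x ⊓ y) ⊔ (y ⊓ z) ⊔ (z ⊓ x)`. -/
def IsNeutralElement {L : Type*} [Lattice L] (x : L) : Prop :=
  ∀ y z : L, (x ⊔ y) ⊓ (y ⊔ z) ⊓ (z ⊔ x) = (x ⊓ y) ⊔ (y ⊓ z) ⊔ (z ⊓ x)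

def IsCodistributiveElement {L : Type*} [Lattice L] (x : L) : Prop :=
  ∀ y z : L, x ⊓ (y ⊔ z) = (x ⊓ y) ⊔ (x ⊓ z)

/-!
For a neutral element `a`, the maps `y ↦ y ⊓ a` and `y ↦ y ⊔ a` are lattice homomorphisms, and
jointly they are injective. The codistributivity identity for an element can therefore be checked
after meeting and after joining both sides with `a`. Passing from `x` to `x ⊔ a` does not affect
the joined identity, while the met identity is automatic for `x ⊔ a` and is codistributivity of
`x ⊓ a` for `x`. When `a` is an atom, `x ⊓ a` is either `⊥` or `a`, and both are codistributive.
-/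

section Lattice

variable {L : Type*} [Lattice L] {a x : L}

namespace IsNeutralElement

theorem toDual (hn : IsNeutralElement a) : IsNeutralElement (OrderDual.toDual a) :=
  fun y z => (hn (OrderDual.ofDual y) (OrderDual.ofDual z)).symm

theorem sup_inf_eq_inf_sup_of_le (hn : IsNeutralElement a) (y : L) {z : L} (haz : a ≤ z) :
    (y ⊔ a) ⊓ z = y ⊓ z ⊔ a := by
  calc (y ⊔ a) ⊓ z = (a ⊔ y) ⊓ (y ⊔ z) ⊓ (z ⊔ a) := by
        rw [sup_eq_left.2 haz, inf_assoc, inf_eq_right.2 (le_sup_right : z ≤ y ⊔ z), sup_comm]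
    _ = a ⊓ y ⊔ y ⊓ z ⊔ z ⊓ a := hn y z
    _ = y ⊓ z ⊔ a := by
        rw [inf_eq_right.2 haz, sup_comm (a ⊓ y), sup_assoc,
          sup_eq_right.2 (inf_le_left : a ⊓ y ≤ a)]

protected theorem sup_inf_right (hn : IsNeutralElement a) (y z : L) :
    y ⊓ z ⊔ a = (y ⊔ a) ⊓ (z ⊔ a) := by
  have hle_sup : (y ⊔ a) ⊓ (z ⊔ a) ≤ y ⊔ z ⊔ a :=
    inf_le_left.trans (sup_le_sup_right le_sup_left a)
  symm
  calc (y ⊔ a) ⊓ (z ⊔ a) = (y ⊔ z ⊔ a) ⊓ ((y ⊔ a) ⊓ (z ⊔ a)) := (inf_eq_right.2 hle_sup).symm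
    _ = (y ⊔ z) ⊓ ((y ⊔ a) ⊓ (z ⊔ a)) ⊔ a :=
        hn.sup_inf_eq_inf_sup_of_le _ (le_inf le_sup_right le_sup_right)
    _ = (a ⊔ y) ⊓ (y ⊔ z) ⊓ (z ⊔ a) ⊔ a := by rw [sup_comm a y, inf_left_comm, inf_assoc]
    _ = a ⊓ y ⊔ y ⊓ z ⊔ z ⊓ a ⊔ a := by rw [hn y z]
    _ = y ⊓ z ⊔ a := by
        rw [sup_assoc, sup_eq_right.2 (inf_le_right : z ⊓ a ≤ a), sup_comm (a ⊓ y), sup_assoc,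
          sup_eq_right.2 (inf_le_left : a ⊓ y ≤ a)]

protected theorem inf_sup_right (hn : IsNeutralElement a) (y z : L) :
    (y ⊔ z) ⊓ a = y ⊓ a ⊔ z ⊓ a :=
  hn.toDual.sup_inf_right (OrderDual.toDual y) (OrderDual.toDual z)

theorem eq_of_inf_eq_of_sup_eq (hn : IsNeutralElement a) {y z : L}
    (hinf : y ⊓ a = z ⊓ a) (hsup : y ⊔ a = z ⊔ a) : y = z := by
  have hsup_le : y ⊔ z ≤ z ⊔ a := sup_le (hsup ▸ le_sup_left) le_sup_left
  have hle_inf : z ⊓ a ≤ y ⊓ z := le_inf (hinf ▸ inf_le_left) inf_le_left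
  refine sup_eq_inf.1 ?_
  calc y ⊔ z = (a ⊔ y) ⊓ (y ⊔ z) ⊓ (z ⊔ a) := by
        rw [sup_comm a y, hsup, inf_eq_right.2 hsup_le, inf_eq_left.2 hsup_le]
    _ = a ⊓ y ⊔ y ⊓ z ⊔ z ⊓ a := hn y z
    _ = y ⊓ z := by
        rw [inf_comm a y, hinf, sup_eq_right.2 hle_inf, sup_eq_left.2 hle_inf]

theorem isCodistributiveElement (hn : IsNeutralElement a) : IsCodistributiveElement a := by
  intro y z
  simpa only [inf_comm a] using hn.inf_sup_right y z

theorem isCodistributiveElement_sup (hn : IsNeutralElement a) (hx : IsCodistributiveElement x) :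
    IsCodistributiveElement (x ⊔ a) := by
  intro y z
  have inf_absorb (w : L) : (x ⊔ a) ⊓ w ⊓ a = w ⊓ a := by
    rw [inf_right_comm, inf_eq_right.2 (le_sup_right : a ≤ x ⊔ a), inf_comm]
  have sup_absorb (w : L) : (x ⊔ a) ⊓ w ⊔ a = x ⊓ w ⊔ a := by
    rw [hn.sup_inf_right, hn.sup_inf_right, sup_assoc, sup_idem]
  apply hn.eq_of_inf_eq_of_sup_eq
  · rw [hn.inf_sup_right, inf_absorb, inf_absorb, inf_absorb, hn.inf_sup_right]
  · rw [sup_absorb, hx, sup_sup_distrib_right, sup_sup_distrib_right ((x ⊔ a) ⊓ y), sup_absorb,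
      sup_absorb]

theorem isCodistributiveElement_of_inf_of_sup (hn : IsNeutralElement a)
    (hinf : IsCodistributiveElement (x ⊓ a)) (hsup : IsCodistributiveElement (x ⊔ a)) :
    IsCodistributiveElement x := by
  intro y z
  apply hn.eq_of_inf_eq_of_sup_eq
  · calc x ⊓ (y ⊔ z) ⊓ a = x ⊓ a ⊓ (y ⊔ z) := inf_right_comm ..
      _ = x ⊓ a ⊓ y ⊔ x ⊓ a ⊓ z := hinf y z
      _ = (x ⊓ y ⊔ x ⊓ z) ⊓ a := by
        rw [hn.inf_sup_right, inf_right_comm, inf_right_comm x a]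
  · calc x ⊓ (y ⊔ z) ⊔ a = (x ⊔ a) ⊓ ((y ⊔ a) ⊔ (z ⊔ a)) := by
          rw [hn.sup_inf_right, sup_sup_distrib_right]
      _ = (x ⊔ a) ⊓ (y ⊔ a) ⊔ (x ⊔ a) ⊓ (z ⊔ a) := hsup _ _
      _ = x ⊓ y ⊔ x ⊓ z ⊔ a := by
          rw [← hn.sup_inf_right, ← hn.sup_inf_right, ← sup_sup_distrib_right]

end IsNeutralElement

theorem isCodistributiveElement_sup_atom_iff_general (hn : IsNeutralElement a)
    (hinf : IsCodistributiveElement (x ⊓ a)) :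
    IsCodistributiveElement x ↔ IsCodistributiveElement (x ⊔ a) :=
  ⟨hn.isCodistributiveElement_sup, hn.isCodistributiveElement_of_inf_of_sup hinf⟩

end Lattice

section OrderBot

variable {L : Type*} [Lattice L] [OrderBot L] {a b : L}

theorem isCodistributiveElement_bot : IsCodistributiveElement (⊥ : L) := by
  intro y z
  simp only [bot_inf_eq, sup_idem]

theorem IsCodistributiveElement.of_le_isAtom (hcod : IsCodistributiveElement a) (ha : IsAtom a)
    (hba : b ≤ a) : IsCodistributiveElement b := by
  obtain rfl | rfl := ha.le_iff.1 hba
  · exact isCodistributiveElement_bot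
  · exact hcod

end OrderBot

/-- If `a` is an atom and a neutral element of a lattice `L` with least element, then
an element `x ∈ L` is a codistributive element of `L` if and only if `x ⊔ a` is. -/
theorem isCodistributiveElement_sup_atom_iff {L : Type*} [Lattice L] [OrderBot L] (a : L)
    (ha : IsAtom a) (hn : IsNeutralElement a) (x : L) :
    IsCodistributiveElement x ↔ IsCodistributiveElement (x ⊔ a) :=
  isCodistributiveElement_sup_atom_iff_general hn
    (hn.isCodistributiveElement.of_le_isAtom ha inf_le_right)
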